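/- Let ω = e^{2πi/3} (a primitive cube root of unity) and consider the matrices F_1 = diag(1,1,ω,ω²), F_2 = (1/√3)·[[1,0,0,√2],[0,−1,√2,0],[0,√2,1,0],[√2,0,0,−1]], F_3 = [[√3/2,1/2,0,0],[1/2,−√3/2,0,0],[0,0,0,1],[0,0,1,0]], and F_4 = [[0,1,0,0],[1,0,0,0],[0,0,0,−1],[0,0,−1,0]] (the generators of the primitive group (C) ≅ 𝔄_6 in PGL_4(ℂ)). If f ∈ ℂ[x_0,x_1,x_2,x_3] is a homogeneous polynomial of degree 4 such that for every M ∈ {F_1, F_2, F_3, F_4} there exists λ ∈ ℂ* with f(Mx) = λ·f(x), then f = 0. -/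

import Mathlib

open MvPolynomial Complex

/-- The action of a matrix on a polynomial: `(A f)(x) = f (A x)`. -/
noncomputable def matAct {N : ℕ} (A : Matrix (Fin N) (Fin N) ℂ)
    (f : MvPolynomial (Fin N) ℂ) : MvPolynomial (Fin N) ℂ :=
  MvPolynomial.aeval (fun i => ∑ j, MvPolynomial.C (A i j) * MvPolynomial.X j) f

/-- `ω = e^{2πi/3}`, a primitive cube root of unity. -/
noncomputable def ω : ℂ := Complex.exp (2 * Real.pi * Complex.I / 3)

/-- `F₁ = diag(1, 1, ω, ω²)`. -/
noncomputable def F₁ : Matrix (Fin 4) (Fin 4) ℂ :=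
  !![1, 0, 0, 0; 0, 1, 0, 0; 0, 0, ω, 0; 0, 0, 0, ω ^ 2]

/-- `F₂ = (1/√3)·[[1,0,0,√2],[0,−1,√2,0],[0,√2,1,0],[√2,0,0,−1]]`. -/
noncomputable def F₂ : Matrix (Fin 4) (Fin 4) ℂ :=
  (1 / (Real.sqrt 3 : ℂ)) •
    !![1, 0, 0, (Real.sqrt 2 : ℂ); 0, -1, (Real.sqrt 2 : ℂ), 0;
       0, (Real.sqrt 2 : ℂ), 1, 0; (Real.sqrt 2 : ℂ), 0, 0, -1]

/-- `F₃ = [[√3/2,1/2,0,0],[1/2,−√3/2,0,0],[0,0,0,1],[0,0,1,0]]`. -/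
noncomputable def F₃ : Matrix (Fin 4) (Fin 4) ℂ :=
  !![(Real.sqrt 3 : ℂ) / 2, 1 / 2, 0, 0; 1 / 2, -(Real.sqrt 3 : ℂ) / 2, 0, 0;
     0, 0, 0, 1; 0, 0, 1, 0]

/-- `F₄ = [[0,1,0,0],[1,0,0,0],[0,0,0,−1],[0,0,−1,0]]`. -/
def F₄ : Matrix (Fin 4) (Fin 4) ℂ :=
  !![0, 1, 0, 0; 1, 0, 0, 0; 0, 0, 0, -1; 0, 0, -1, 0]

/-! The matrices `F₃` and `F₄` are involutions, `F₁³ = 1`, `F₁ F₃ F₁ = F₃`, and `(F₄ F₃)³` is the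
scalar `-1`, which fixes quartics; hence `F₁` and `F₄ F₃` fix `f` itself and not only up to a
factor. In the coordinates `u = x₀ + i x₁`, `v = x₀ - i x₁`, `x₂`, `x₃` these two matrices are
diagonal, and the quartic monomials they both fix are `u² v²`, `u v x₂ x₃` and `x₂² x₃²`. So `f`
lies in the span of `(x₀² + x₁²)²`, `(x₀² + x₁²) x₂ x₃` and `x₂² x₃²`, and comparing `f (F₂ x)` with
`f x` at three points shows that the three coefficients vanish. -/

theorem smul_eq_self_of_pow_smul_eq_self {M α : Type*} [Monoid M] [MulAction M α] {a : M} {x : α}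
    {n : ℕ} (hn : a ^ n • x = x) (hn' : a ^ (n + 1) • x = x) : a • x = x := by
  rwa [pow_succ', mul_smul, hn] at hn'

section MatAct

variable {N : ℕ} {A B : Matrix (Fin N) (Fin N) ℂ} {a b : ℂ} {f : MvPolynomial (Fin N) ℂ}

theorem eval_matAct (A : Matrix (Fin N) (Fin N) ℂ) (f : MvPolynomial (Fin N) ℂ)
    (v : Fin N → ℂ) : eval v (matAct A f) = eval (A.mulVec v) f := by
  rw [matAct, ← aeval_eq_eval, ← aeval_eq_eval]
  simp only [comp_aeval_apply, map_sum, map_mul, aeval_C, aeval_X]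
  rfl

theorem matAct_mul (A B : Matrix (Fin N) (Fin N) ℂ) (f : MvPolynomial (Fin N) ℂ) :
    matAct (A * B) f = matAct B (matAct A f) :=
  MvPolynomial.funext fun v => by simp only [eval_matAct, Matrix.mulVec_mulVec]

theorem matAct_one (f : MvPolynomial (Fin N) ℂ) : matAct 1 f = f :=
  MvPolynomial.funext fun v => by rw [eval_matAct, Matrix.one_mulVec]

theorem matAct_smul (A : Matrix (Fin N) (Fin N) ℂ) (a : ℂ) (f : MvPolynomial (Fin N) ℂ) :
    matAct A (a • f) = a • matAct A f :=
  map_smul _ a f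

theorem matAct_mul_of_eq_smul (hA : matAct A f = a • f) (hB : matAct B f = b • f) :
    matAct (A * B) f = (a * b) • f := by
  rw [matAct_mul, hA, matAct_smul, hB, smul_smul]

theorem matAct_pow_of_eq_smul (hA : matAct A f = a • f) (n : ℕ) :
    matAct (A ^ n) f = a ^ n • f := by
  induction n with
  | zero => simp only [pow_zero, matAct_one, one_smul]
  | succ n ih => simpa only [pow_succ] using matAct_mul_of_eq_smul ih hA

theorem matAct_eq_self_of_mul_eq_mul {P D : Matrix (Fin N) (Fin N) ℂ} (h : A * P = P * D)
    (hA : matAct A f = f) : matAct D (matAct P f) = matAct P f := by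
  rw [← matAct_mul, ← h, matAct_mul, hA]

theorem isHomogeneous_matAct {n : ℕ} (hf : f.IsHomogeneous n) (A : Matrix (Fin N) (Fin N) ℂ) :
    (matAct A f).IsHomogeneous n := by
  have h := hf.aeval (fun i => ∑ j, C (A i j) * X j) fun i =>
    IsHomogeneous.sum _ _ 1 fun j _ => (isHomogeneous_X ℂ j).C_mul (A i j)
  rwa [one_mul] at h

theorem matAct_diagonal_monomial (d : Fin N → ℂ) (m : Fin N →₀ ℕ) (c : ℂ) :
    matAct (Matrix.diagonal d) (monomial m c) = monomial m ((∏ i, d i ^ m i) * c) :=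
  MvPolynomial.funext fun v => by
    rw [eval_matAct, eval_monomial, eval_monomial, Finsupp.prod_fintype _ _ fun i => pow_zero _,
      Finsupp.prod_fintype _ _ fun i => pow_zero _]
    simp only [Matrix.mulVec_diagonal, mul_pow, Finset.prod_mul_distrib]
    ring

theorem coeff_matAct_diagonal (d : Fin N → ℂ) (f : MvPolynomial (Fin N) ℂ) (m : Fin N →₀ ℕ) :
    coeff m (matAct (Matrix.diagonal d) f) = (∏ i, d i ^ m i) * coeff m f := by
  classical
  induction f using MvPolynomial.induction_on' with
  | monomial k c =>
    rw [matAct_diagonal_monomial, coeff_monomial, coeff_monomial]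
    split_ifs with hkm
    · rw [hkm]
    · rw [mul_zero]
  | add p q hp hq =>
    rw [matAct, map_add, ← matAct, ← matAct, coeff_add, hp, hq, coeff_add, mul_add]

theorem prod_pow_eq_one_of_matAct_diagonal_eq_self {d : Fin N → ℂ}
    (hf : matAct (Matrix.diagonal d) f = f) {m : Fin N →₀ ℕ} (hm : coeff m f ≠ 0) :
    ∏ i, d i ^ m i = 1 := by
  rw [← mul_eq_right₀ hm, ← coeff_matAct_diagonal, hf]

theorem matAct_diagonal_const {n : ℕ} (hf : f.IsHomogeneous n) (z : ℂ) :
    matAct (Matrix.diagonal fun _ => z) f = z ^ n • f := by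
  ext m
  rw [coeff_matAct_diagonal, coeff_smul, smul_eq_mul]
  by_cases hm : coeff m f = 0
  · rw [hm, mul_zero, mul_zero]
  · rw [Finset.prod_pow_eq_pow_sum, ← Finsupp.degree_eq_sum,
      not_imp_comm.mp hf.coeff_eq_zero hm]

end MatAct

theorem isPrimitiveRoot_ω : IsPrimitiveRoot ω 3 := by
  simpa only [ω, Nat.cast_ofNat] using Complex.isPrimitiveRoot_exp 3 three_ne_zero

theorem ω_eq : ω = -1 / 2 + (Real.sqrt 3 : ℂ) / 2 * I := by
  have angle : (2 * Real.pi * I / 3 : ℂ) = ((Real.pi - Real.pi / 3 : ℝ) : ℂ) * I := by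
    push_cast; ring
  rw [ω, angle, exp_mul_I, ← ofReal_cos, ← ofReal_sin, Real.cos_pi_sub, Real.sin_pi_sub,
    Real.cos_pi_div_three, Real.sin_pi_div_three]
  push_cast; ring

theorem ofReal_sqrt_ofNat_sq (n : ℕ) [n.AtLeastTwo] :
    (Real.sqrt ofNat(n) : ℂ) ^ 2 = ofNat(n) := by
  rw [← ofReal_pow, Real.sq_sqrt (Nat.ofNat_nonneg n), ofReal_ofNat]

theorem F₁_eq_diagonal : F₁ = Matrix.diagonal ![1, 1, ω, ω ^ 2] := by
  ext i j; fin_cases i <;> fin_cases j <;> simp [F₁]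

theorem F₁_pow_three : F₁ ^ 3 = 1 := by
  have hω := isPrimitiveRoot_ω.pow_eq_one
  rw [F₁_eq_diagonal, Matrix.diagonal_pow, ← Matrix.diagonal_one]
  congr 1; ext i; fin_cases i <;> simp [hω, pow_right_comm ω 2 3]

theorem F₁_mul_F₃_mul_F₁ : F₁ * F₃ * F₁ = F₃ := by
  have hω := isPrimitiveRoot_ω.pow_eq_one
  ext i j; fin_cases i <;> fin_cases j <;>
    simp only [F₁, F₃, Matrix.mul_apply, Fin.sum_univ_four, Matrix.of_apply, Matrix.cons_val,
      Fin.zero_eta, Fin.mk_one, Fin.reduceFinMk] <;>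
    grind

theorem F₃_sq : F₃ ^ 2 = 1 := by
  have sqrt_three_sq := ofReal_sqrt_ofNat_sq 3
  ext i j; fin_cases i <;> fin_cases j <;>
    simp only [F₃, sq, Matrix.mul_apply, Fin.sum_univ_four, Matrix.of_apply, Matrix.cons_val,
      Matrix.one_apply, Fin.zero_eta, Fin.mk_one, Fin.reduceFinMk] <;>
    grind

theorem F₄_sq : F₄ ^ 2 = 1 := by
  ext i j; fin_cases i <;> fin_cases j <;>
    simp [F₄, sq, Matrix.mul_apply, Fin.sum_univ_four]

theorem F₄_mul_F₃ : F₄ * F₃ =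
    !![1 / 2, -(Real.sqrt 3 : ℂ) / 2, 0, 0; (Real.sqrt 3 : ℂ) / 2, 1 / 2, 0, 0;
      0, 0, -1, 0; 0, 0, 0, -1] := by
  ext i j; fin_cases i <;> fin_cases j <;>
    simp [F₄, F₃, Matrix.mul_apply, Fin.sum_univ_four]

theorem F₄_mul_F₃_pow_three : (F₄ * F₃) ^ 3 = Matrix.diagonal fun _ => -1 := by
  have sqrt_three_sq := ofReal_sqrt_ofNat_sq 3
  rw [F₄_mul_F₃]
  ext i j; fin_cases i <;> fin_cases j <;>
    simp only [pow_succ, pow_zero, one_mul, Matrix.mul_apply, Fin.sum_univ_four, Matrix.of_apply,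
      Matrix.cons_val, Matrix.diagonal_apply, Fin.zero_eta, Fin.mk_one, Fin.reduceFinMk] <;>
    grind

theorem matAct_F₁_eq_self {f : MvPolynomial (Fin 4) ℂ} {c₁ c₃ : ℂ} (hc₃ : c₃ ≠ 0)
    (h₁ : matAct F₁ f = c₁ • f) (h₃ : matAct F₃ f = c₃ • f) : matAct F₁ f = f := by
  have cube : c₁ ^ 3 • f = f := by
    rw [← matAct_pow_of_eq_smul h₁, F₁_pow_three, matAct_one]
  have sq : c₁ ^ 2 • f = f := by
    have conj := matAct_mul_of_eq_smul (matAct_mul_of_eq_smul h₁ h₃) h₁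
    rw [F₁_mul_F₃_mul_F₁, h₃, mul_right_comm, mul_comm, mul_smul, ← pow_two] at conj
    exact (smul_right_injective _ hc₃ conj).symm
  rw [h₁, smul_eq_self_of_pow_smul_eq_self sq cube]

theorem matAct_F₄_mul_F₃_eq_self {f : MvPolynomial (Fin 4) ℂ} (hf : f.IsHomogeneous 4) {c₃ c₄ : ℂ}
    (h₃ : matAct F₃ f = c₃ • f) (h₄ : matAct F₄ f = c₄ • f) : matAct (F₄ * F₃) f = f := by
  have h := matAct_mul_of_eq_smul h₄ h₃
  have sq₃ : c₃ ^ 2 • f = f := by rw [← matAct_pow_of_eq_smul h₃, F₃_sq, matAct_one]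
  have sq₄ : c₄ ^ 2 • f = f := by rw [← matAct_pow_of_eq_smul h₄, F₄_sq, matAct_one]
  have cube : (c₄ * c₃) ^ 3 • f = f := by
    rw [← matAct_pow_of_eq_smul h, F₄_mul_F₃_pow_three, matAct_diagonal_const hf,
      Even.neg_one_pow (by decide), one_smul]
  have sq : (c₄ * c₃) ^ 2 • f = f := by rw [mul_pow, mul_smul, sq₃, sq₄]
  rw [h, smul_eq_self_of_pow_smul_eq_self sq cube]

section PairedExponent

open Finset.HasAntidiagonal (antidiagonal mem_antidiagonal)

/-- The exponent vector `(i, i, j, j)` of the monomial `(x₀ x₁)ⁱ (x₂ x₃)ʲ`, for `p = (i, j)`. -/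
noncomputable def pairedExponent (p : ℕ × ℕ) : Fin 4 →₀ ℕ :=
  Finsupp.equivFunOnFinite.symm ![p.1, p.1, p.2, p.2]

theorem pairedExponent_injective : Function.Injective pairedExponent := fun p q h => by
  have hval : ![p.1, p.1, p.2, p.2] = ![q.1, q.1, q.2, q.2] :=
    Finsupp.equivFunOnFinite.symm.injective h
  exact Prod.ext (congrFun hval 0) (congrFun hval 2)

theorem eval_eq_sum_pairedExponent {g : MvPolynomial (Fin 4) ℂ} {n : ℕ}
    (hg : ∀ m, coeff m g ≠ 0 → ∃ p ∈ antidiagonal n, pairedExponent p = m)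
    (v : Fin 4 → ℂ) :
    eval v g = ∑ p ∈ antidiagonal n,
      coeff (pairedExponent p) g * ((v 0 * v 1) ^ p.1 * (v 2 * v 3) ^ p.2) := by
  have support_subset :
      g.support ⊆ (antidiagonal n).map ⟨pairedExponent, pairedExponent_injective⟩ :=
    fun m hm => Finset.mem_map.mpr (hg m (mem_support_iff.mp hm))
  rw [eval_eq', Finset.sum_subset support_subset fun m _ hm => by
    rw [notMem_support_iff.mp hm, zero_mul], Finset.sum_map]
  refine Finset.sum_congr rfl fun p _ => ?_
  simp only [Function.Embedding.coeFn_mk, Fin.prod_univ_four, pairedExponent,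
    Finsupp.equivFunOnFinite_symm_apply_apply, Matrix.cons_val, mul_pow, mul_assoc]

theorem exists_pairedExponent_eq {g : MvPolynomial (Fin 4) ℂ} (hg : g.IsHomogeneous 4)
    (h₁ : matAct (Matrix.diagonal ![1, 1, ω, ω ^ 2]) g = g)
    (h₂ : matAct (Matrix.diagonal ![-ω ^ 2, -ω, -1, -1]) g = g)
    {m : Fin 4 →₀ ℕ} (hm : coeff m g ≠ 0) :
    ∃ p ∈ antidiagonal 2, pairedExponent p = m := by
  have degree_m : m 0 + m 1 + m 2 + m 3 = 4 := by
    rw [← Fin.sum_univ_four, ← Finsupp.degree_eq_sum]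
    exact not_imp_comm.mp hg.coeff_eq_zero hm
  have dvd₁ : 3 ∣ m 2 + 2 * m 3 := by
    have h := prod_pow_eq_one_of_matAct_diagonal_eq_self h₁ hm
    rw [← isPrimitiveRoot_ω.pow_eq_one_iff_dvd, ← h, Fin.prod_univ_four]
    simp [pow_add, pow_mul]
  have dvd₂ : 3 ∣ 2 * m 0 + m 1 := by
    have h := prod_pow_eq_one_of_matAct_diagonal_eq_self h₂ hm
    rw [← isPrimitiveRoot_ω.pow_eq_one_iff_dvd, ← h, Fin.prod_univ_four]
    have sign : (-1 : ℂ) ^ (m 0 + m 1 + m 2 + m 3) = 1 := by rw [degree_m]; norm_num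
    simp only [Matrix.cons_val, neg_pow (ω ^ 2), neg_pow ω]
    linear_combination (-ω ^ (2 * m 0 + m 1)) * sign
  refine ⟨(m 0, m 2), mem_antidiagonal.mpr (by lia), ?_⟩
  ext i; fin_cases i <;>
    simp only [pairedExponent, Finsupp.equivFunOnFinite_symm_apply_apply, Matrix.cons_val,
      Fin.zero_eta, Fin.mk_one, Fin.reduceFinMk] <;>
    lia

end PairedExponent

/-- A common eigenbasis, in columns, of `F₁` and `F₄ * F₃`. As a substitution it sends `x₀`, `x₁` to
`(x₀ + x₁) / 2`, `(x₀ - x₁) / (2i)`, and is inverse to passing to `x₀ + i x₁`, `x₀ - i x₁`. -/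
noncomputable def eigenbasis : Matrix (Fin 4) (Fin 4) ℂ :=
  !![1 / 2, 1 / 2, 0, 0; -I / 2, I / 2, 0, 0; 0, 0, 1, 0; 0, 0, 0, 1]

theorem eigenbasis_mulVec (v : Fin 4 → ℂ) :
    eigenbasis.mulVec ![v 0 + I * v 1, v 0 - I * v 1, v 2, v 3] = v := by
  ext i; fin_cases i <;>
    simp only [eigenbasis, Matrix.mulVec, dotProduct, Fin.sum_univ_four, Matrix.of_apply,
      Matrix.cons_val, Fin.zero_eta, Fin.mk_one, Fin.reduceFinMk] <;>
    grind [I_sq]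

theorem F₁_mul_eigenbasis :
    F₁ * eigenbasis = eigenbasis * Matrix.diagonal ![1, 1, ω, ω ^ 2] := by
  rw [F₁_eq_diagonal]
  ext i j; fin_cases i <;> fin_cases j <;>
    simp [eigenbasis, Matrix.mul_diagonal, Matrix.diagonal_mul]

theorem F₄_mul_F₃_mul_eigenbasis :
    F₄ * F₃ * eigenbasis = eigenbasis * Matrix.diagonal ![-ω ^ 2, -ω, -1, -1] := by
  have sqrt_three_sq := ofReal_sqrt_ofNat_sq 3
  rw [F₄_mul_F₃]
  ext i j
  rw [Matrix.mul_diagonal]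
  fin_cases i <;> fin_cases j <;>
    simp only [eigenbasis, ω_eq, Matrix.mul_apply, Fin.sum_univ_four, Matrix.of_apply,
      Matrix.cons_val, Fin.zero_eta, Fin.mk_one, Fin.reduceFinMk] <;>
    grind [I_sq]

/-- The values of the general quartic fixed by `F₁` and `F₄ * F₃`: the one with coefficients
`p`, `q`, `r` on `(x₀² + x₁²)²`, `(x₀² + x₁²) x₂ x₃`, `x₂² x₃²`. -/
def invariantQuartic (p q r : ℂ) (v : Fin 4 → ℂ) : ℂ :=
  p * (v 0 ^ 2 + v 1 ^ 2) ^ 2 + q * ((v 0 ^ 2 + v 1 ^ 2) * (v 2 * v 3)) + r * (v 2 * v 3) ^ 2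

theorem exists_eval_eq_invariantQuartic {f : MvPolynomial (Fin 4) ℂ} (hf : f.IsHomogeneous 4)
    (h₁ : matAct F₁ f = f) (h₄₃ : matAct (F₄ * F₃) f = f) :
    ∃ p q r : ℂ, ∀ v, eval v f = invariantQuartic p q r v := by
  set g := matAct eigenbasis f
  have g₁ := matAct_eq_self_of_mul_eq_mul F₁_mul_eigenbasis h₁
  have g₂ := matAct_eq_self_of_mul_eq_mul F₄_mul_F₃_mul_eigenbasis h₄₃
  have eval_g := eval_eq_sum_pairedExponent fun m =>
    exists_pairedExponent_eq (isHomogeneous_matAct hf eigenbasis) g₁ g₂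
  refine ⟨coeff (pairedExponent (2, 0)) g, coeff (pairedExponent (1, 1)) g,
    coeff (pairedExponent (0, 2)) g, fun v => ?_⟩
  have norm_eq : (v 0 + I * v 1) * (v 0 - I * v 1) = v 0 ^ 2 + v 1 ^ 2 := by
    linear_combination (-v 1 ^ 2) * I_sq
  rw [← eigenbasis_mulVec v, ← eval_matAct, eval_g, eigenbasis_mulVec]
  simp only [Finset.Nat.sum_antidiagonal_eq_sum_range_succ_mk, Finset.sum_range_succ,
    Finset.sum_range_zero, Matrix.cons_val, norm_eq, invariantQuartic, g]
  ring

theorem F₂_mulVec (v : Fin 4 → ℂ) : F₂.mulVec v = (1 / (Real.sqrt 3 : ℂ)) •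
    ![v 0 + (Real.sqrt 2 : ℂ) * v 3, -v 1 + (Real.sqrt 2 : ℂ) * v 2,
      (Real.sqrt 2 : ℂ) * v 1 + v 2, (Real.sqrt 2 : ℂ) * v 0 - v 3] := by
  rw [F₂, Matrix.smul_mulVec]
  congr 1
  ext i; fin_cases i <;> simp [Matrix.mulVec, dotProduct, Fin.sum_univ_four, sub_eq_add_neg]

theorem invariantQuartic_smul (p q r a : ℂ) (v : Fin 4 → ℂ) :
    invariantQuartic p q r (a • v) = a ^ 4 * invariantQuartic p q r v := by
  simp only [invariantQuartic, Pi.smul_apply, smul_eq_mul]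
  ring

theorem invariantQuartic_coeffs_eq_zero {p q r c : ℂ}
    (h : ∀ v, invariantQuartic p q r (F₂.mulVec v) = c * invariantQuartic p q r v) :
    p = 0 ∧ q = 0 ∧ r = 0 := by
  have sqrt_two_sq := ofReal_sqrt_ofNat_sq 2
  have sqrt_three_sq := ofReal_sqrt_ofNat_sq 3
  have scale : (1 / (Real.sqrt 3 : ℂ)) ^ 4 = 1 / 9 := by
    rw [one_div_pow, pow_mul _ 2 2, sqrt_three_sq]; norm_num
  have transform (v : Fin 4 → ℂ) : 1 / 9 * invariantQuartic p q r
      ![v 0 + (Real.sqrt 2 : ℂ) * v 3, -v 1 + (Real.sqrt 2 : ℂ) * v 2,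
        (Real.sqrt 2 : ℂ) * v 1 + v 2, (Real.sqrt 2 : ℂ) * v 0 - v 3] =
      c * invariantQuartic p q r v := by
    rw [← h, F₂_mulVec, invariantQuartic_smul, scale]
  have h₁ := transform ![0, 0, 1, 0]
  have h₂ := transform ![1, 0, 1, 0]
  have h₃ := transform ![1, 0, -1, 0]
  simp only [invariantQuartic, Matrix.cons_val] at h₁ h₂ h₃
  have hp : p = 0 := by
    linear_combination (9 / 4) * h₁ - p / 4 * ((Real.sqrt 2 : ℂ) ^ 2 + 2) * sqrt_two_sq
  have add_eq_zero : 2 * r + 3 * (Real.sqrt 2 : ℂ) * q = 0 := by grind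
  have sub_eq_zero : 2 * r - 3 * (Real.sqrt 2 : ℂ) * q = 0 := by grind
  have hr : r = 0 := by linear_combination (add_eq_zero + sub_eq_zero) / 4
  have hq : q = 0 := by
    linear_combination
      (Real.sqrt 2 : ℂ) / 12 * (add_eq_zero - sub_eq_zero) - q / 2 * sqrt_two_sq
  exact ⟨hp, hq, hr⟩

theorem stmt19 (f : MvPolynomial (Fin 4) ℂ) (hf : f.IsHomogeneous 4)
    (hinv : ∀ M ∈ ({F₁, F₂, F₃, F₄} : Set (Matrix (Fin 4) (Fin 4) ℂ)),
      ∃ c : ℂ, c ≠ 0 ∧ matAct M f = c • f) :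
    f = 0 := by
  obtain ⟨c₁, -, h₁⟩ := hinv F₁ (by simp)
  obtain ⟨c₂, -, h₂⟩ := hinv F₂ (by simp)
  obtain ⟨c₃, hc₃, h₃⟩ := hinv F₃ (by simp)
  obtain ⟨c₄, -, h₄⟩ := hinv F₄ (by simp)
  obtain ⟨p, q, r, eval_f⟩ := exists_eval_eq_invariantQuartic hf
    (matAct_F₁_eq_self hc₃ h₁ h₃) (matAct_F₄_mul_F₃_eq_self hf h₃ h₄)
  obtain ⟨rfl, rfl, rfl⟩ : p = 0 ∧ q = 0 ∧ r = 0 := invariantQuartic_coeffs_eq_zero fun v => by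
    rw [← eval_f, ← eval_f, ← eval_matAct, h₂, smul_eval]
  exact MvPolynomial.funext fun v => by
    simp only [eval_f, invariantQuartic, zero_mul, add_zero, map_zero]
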